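/- arXiv:2206.14929 — 2 statements merged into one kernel-verified Lean document; each statement's English description precedes it below -/
import Mathlib

section
/- For every N ∈ ℕ and every vector ψ ∈ Q_N, the teleportation identity holds: 2^{−N} · Σ_{r,s ∈ {0,1}^N} (σx(r)σz(s) ⊗ σx(r)σz(s) ⊗ Id_{Q_N})(ψ ⊗ φ+_N) = 2^{−N/2} · Σ_{x ∈ {0,1}^N} e_x ⊗ e_x ⊗ ψ, as an equality in Q_N ⊗ Q_N ⊗ Q_N (on the left, ψ occupies the first tensor factor and φ+_N the last two; on the right, the maximally entangled state occupies the first two factors and ψ the third). -/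
open scoped Matrix Kronecker ComplexConjugate

noncomputable section

/-- Bit vectors of length `N`, i.e. elements of `{0,1}^N`. -/
abbrev BV (N : ℕ) := Fin N → Bool

/-- The space `Q_N` of functions `{0,1}^N → ℂ`. -/
abbrev QV (N : ℕ) := BV N → ℂ

/-- Linear operators on `Q_N`, represented as matrices in the standard basis. -/
abbrev QOp (N : ℕ) := Matrix (BV N) (BV N) ℂ

/-- Bitwise XOR of bit vectors. -/
def bvXor {N : ℕ} (x r : BV N) : BV N := fun i => xor (x i) (r i)

/-- The sign `(-1)^{s·x}` where `s·x = Σ_i s_i x_i mod 2`. -/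
def bSign {N : ℕ} (s x : BV N) : ℂ :=
  (-1 : ℂ) ^ (Finset.univ.filter fun i => s i = true ∧ x i = true).card

/-- The standard basis vector `e_x` of `Q_N`. -/
def eVec {N : ℕ} (x : BV N) : QV N := fun y => if y = x then 1 else 0

/-- Tensor product of two vectors (as functions). -/
def tensVec {α β : Type*} (f : α → ℂ) (g : β → ℂ) : α × β → ℂ := fun p => f p.1 * g p.2

/-- The Pauli parity operator `σx(r)`, sending `e_x` to `e_{x ⊕ r}`. -/
def sigmaX {N : ℕ} (r : BV N) : QOp N :=
  Matrix.of fun y x => if y = bvXor x r then 1 else 0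

/-- The Pauli parity operator `σz(s)`, sending `e_x` to `(-1)^{s·x} e_x`. -/
def sigmaZ {N : ℕ} (s : BV N) : QOp N :=
  Matrix.diagonal fun x => bSign s x

/-- The scalar `2^{-N/2}`. -/
def invSqrt2pow (N : ℕ) : ℂ := (((Real.sqrt 2)⁻¹ : ℝ) : ℂ) ^ N

/-- The maximally entangled state `φ⁺_N = 2^{-N/2} Σ_x e_x ⊗ e_x`. -/
def phiPlus (N : ℕ) : BV N × BV N → ℂ :=
  invSqrt2pow N • ∑ x : BV N, tensVec (eVec x) (eVec x)

/-- The standard (complex) inner product on a finite function space. -/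
def qInner {α : Type*} [Fintype α] (f g : α → ℂ) : ℂ :=
  ∑ x, (starRingEnd ℂ) (f x) * g x

/-- The norm associated to `qInner`. -/
def qNorm {α : Type*} [Fintype α] (f : α → ℂ) : ℝ :=
  Real.sqrt (qInner f f).re

/-- A binary observable: a self-adjoint operator squaring to the identity. -/
def IsBinaryObs {ι : Type*} [Fintype ι] [DecidableEq ι] (O : Matrix ι ι ℂ) : Prop :=
  O.IsHermitian ∧ O * O = 1

/-- For pairwise commuting operators `X i`, the parity product `X(r) = ∏_{i : r_i = 1} X_i`. -/
def obsProd {n : ℕ} {ι : Type*} [Fintype ι] [DecidableEq ι]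
    (X : Fin n → Matrix ι ι ℂ) (hX : ∀ i j, Commute (X i) (X j)) (r : BV n) :
    Matrix ι ι ℂ :=
  (Finset.univ.filter fun i => r i = true).noncommProd X fun i _ j _ _ => hX i j

/-- The set of bit vectors supported on `R`. -/
def suppSet {N : ℕ} (R : Finset (Fin N)) : Finset (BV N) :=
  Finset.univ.filter fun u => ∀ i, u i = true → i ∈ R

/-- The projector `Π^{σx}_u = 2^{-|R|} Σ_{u' supported on R} (-1)^{u·u'} σx(u')`. -/
def projPauliX {N : ℕ} (R : Finset (Fin N)) (u : BV N) : QOp N :=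
  ((2 : ℂ) ^ R.card)⁻¹ • ∑ u' ∈ suppSet R, bSign u u' • sigmaX u'

/-- The projector `Π^{σz}_v = 2^{-|S|} Σ_{v' supported on S} (-1)^{v·v'} σz(v')`. -/
def projPauliZ {N : ℕ} (S : Finset (Fin N)) (v : BV N) : QOp N :=
  ((2 : ℂ) ^ S.card)⁻¹ • ∑ v' ∈ suppSet S, bSign v v' • sigmaZ v'

/-- The projector `Π^X_u = 2^{-|R|} Σ_{u' supported on R} (-1)^{u·u'} X(u')`
for a family of commuting binary observables. -/
def projObs {N : ℕ} {ι : Type*} [Fintype ι] [DecidableEq ι]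
    (X : Fin N → Matrix ι ι ℂ) (hX : ∀ i j, Commute (X i) (X j))
    (R : Finset (Fin N)) (u : BV N) : Matrix ι ι ℂ :=
  ((2 : ℂ) ^ R.card)⁻¹ • ∑ u' ∈ suppSet R, bSign u u' • obsProd X hX u'

/-- The extracted global vector
`Φ = 2^{-N} Σ_{r,s} (X(r)Z(s) ⊗ σx(r)σz(s) ⊗ Id)(ψ ⊗ φ⁺_N)`. -/
def extractedVec {N : ℕ} {ι : Type*} [Fintype ι] [DecidableEq ι]
    (X Z : Fin N → Matrix ι ι ℂ)
    (hX : ∀ i j, Commute (X i) (X j)) (hZ : ∀ i j, Commute (Z i) (Z j))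
    (ψ : ι → ℂ) : ι × BV N × BV N → ℂ :=
  ((2 : ℂ) ^ N)⁻¹ • ∑ r : BV N, ∑ s : BV N,
    ((obsProd X hX r * obsProd Z hZ s) ⊗ₖ ((sigmaX r * sigmaZ s) ⊗ₖ (1 : QOp N))).mulVec
      (tensVec ψ (phiPlus N))


theorem bSign_eq_prod {N : ℕ} (s x : BV N) :
    bSign s x = ∏ i, (if s i = true ∧ x i = true then (-1 : ℂ) else 1) := by
  unfold bSign
  rw [Finset.prod_ite]
  simp

theorem bSign_orth {N : ℕ} (x y : BV N) :
    ∑ s : BV N, bSign s x * bSign s y = if x = y then (2 : ℂ) ^ N else 0 := by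
  simp only [bSign_eq_prod, ← Finset.prod_mul_distrib]
  have h := Finset.prod_univ_sum (fun _ : Fin N => (Finset.univ : Finset Bool))
    (fun i b => (if b = true ∧ x i = true then (-1 : ℂ) else 1) *
      (if b = true ∧ y i = true then (-1 : ℂ) else 1))
  rw [Fintype.piFinset_univ] at h
  rw [← h]
  have h2 : ∀ i, (∑ b : Bool, (if b = true ∧ x i = true then (-1 : ℂ) else 1) *
      (if b = true ∧ y i = true then (-1 : ℂ) else 1)) = if x i = y i then 2 else 0 := by
    intro i
    cases x i <;> cases y i <;> norm_num
  simp only [h2]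
  by_cases hxy : x = y
  · subst hxy
    simp
  · rw [if_neg hxy]
    obtain ⟨i, hi⟩ := Function.ne_iff.mp hxy
    exact Finset.prod_eq_zero (Finset.mem_univ i) (if_neg hi)

theorem bvXor_eq_iff {N : ℕ} (x y r : BV N) : y = bvXor x r ↔ x = bvXor y r := by
  constructor <;> (rintro rfl; funext i; simp [bvXor])

theorem bvXor_eq_iff' {N : ℕ} (b c r : BV N) : bvXor b r = c ↔ r = bvXor b c := by
  constructor <;> (rintro rfl; funext i; simp [bvXor])

theorem bvXor_left_inj {N : ℕ} (a b r : BV N) : bvXor a r = bvXor b r ↔ a = b := by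
  constructor
  · intro h
    have := (bvXor_eq_iff b _ r).1 h
    rw [this]
    funext i; simp [bvXor]
  · rintro rfl; rfl

theorem pauli_apply {N : ℕ} (r s y x : BV N) :
    (sigmaX r * sigmaZ s) y x = if x = bvXor y r then bSign s x else 0 := by
  simp [sigmaX, sigmaZ, Matrix.mul_diagonal, bvXor_eq_iff x y r]

theorem phiPlus_apply {N : ℕ} (b c : BV N) :
    phiPlus N (b, c) = if b = c then invSqrt2pow N else 0 := by
  simp [phiPlus, tensVec, eVec, Finset.sum_apply, eq_comm]

theorem term_apply {N : ℕ} (ψ : QV N) (r s a b c : BV N) :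
    (((sigmaX r * sigmaZ s) ⊗ₖ ((sigmaX r * sigmaZ s) ⊗ₖ (1 : QOp N))).mulVec
      (tensVec ψ (phiPlus N))) (a, b, c)
    = (bSign s (bvXor a r) * bSign s (bvXor b r)) *
        (ψ (bvXor a r) * if r = bvXor b c then invSqrt2pow N else 0) := by
  simp only [Matrix.mulVec, dotProduct, Fintype.sum_prod_type, Matrix.kroneckerMap_apply,
    pauli_apply, tensVec, phiPlus_apply, Matrix.one_apply]
  rw [Finset.sum_eq_single (bvXor a r) (by intro x _ h; simp [h]) (by simp),
    Finset.sum_eq_single (bvXor b r) (by intro x _ h; simp [h]) (by simp),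
    Finset.sum_eq_single c (by intro x _ h; simp [Ne.symm h]) (by simp)]
  simp only [if_true, bvXor_eq_iff']
  ring

/-- Teleportation identity, eq. (1) of the paper:
`2^{-N} Σ_{r,s} (σx(r)σz(s) ⊗ σx(r)σz(s) ⊗ Id)(ψ ⊗ φ⁺_N) = 2^{-N/2} Σ_x e_x ⊗ e_x ⊗ ψ`. -/
theorem teleportation_identity (N : ℕ) (ψ : QV N) :
    ((2 : ℂ) ^ N)⁻¹ • ∑ r : BV N, ∑ s : BV N,
        (((sigmaX r * sigmaZ s) ⊗ₖ ((sigmaX r * sigmaZ s) ⊗ₖ (1 : QOp N))).mulVec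
          (tensVec ψ (phiPlus N)))
      = invSqrt2pow N • ∑ x : BV N, tensVec (eVec x) (tensVec (eVec x) ψ) := by
  funext p
  obtain ⟨a, b, c⟩ := p
  simp only [Pi.smul_apply, Finset.sum_apply, term_apply, ← Finset.sum_mul, bSign_orth,
    bvXor_left_inj, smul_eq_mul]
  have hR : ∑ x : BV N, tensVec (eVec x) (tensVec (eVec x) ψ) (a, b, c)
      = if a = b then ψ c else 0 := by
    simp [tensVec, eVec, eq_comm]
  rw [hR, Finset.sum_eq_single (bvXor b c) (by intro x _ h; simp [h]) (by simp)]
  by_cases hab : a = b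
  · subst hab
    have : bvXor a (bvXor a c) = c := by funext i; simp [bvXor]
    simp [this]
    ring
  · simp [hab]

end
end

section
/- Let (P_i)_{i∈ι} be a finite family of m ≥ 1 orthogonal projections on a complex inner product space, let ψ be a unit vector, and let ε ≥ 0 be such that Re⟨ψ, (P_iP_j + P_jP_i)ψ⟩ ≤ ε for all i ≠ j. Then the average acceptance probability satisfies (1/m)·Σ_{i∈ι} Re⟨ψ, P_iψ⟩ ≤ 1/√m + √ε. -/
open scoped ComplexInnerProductSpace

/-- if `(P_i)_{i ∈ ι}` is a finite family of `m ≥ 1` orthogonal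
projections on a complex inner product space, `ψ` is a unit vector, and all cross
terms satisfy `Re⟨ψ, (P_iP_j + P_jP_i)ψ⟩ ≤ ε` for `i ≠ j` (with `ε ≥ 0`), then the
average acceptance probability is at most `1/√m + √ε`. -/
theorem average_acceptance_bound {E : Type*} [NormedAddCommGroup E]
    [InnerProductSpace ℂ E] {ι : Type*} [Fintype ι]
    (P : ι → E →ₗ[ℂ] E)
    (hPsa : ∀ (i : ι) (x y : E), ⟪P i x, y⟫ = ⟪x, P i y⟫)
    (hPidem : ∀ (i : ι) (x : E), P i (P i x) = P i x)
    (ψ : E) (hψ : ‖ψ‖ = 1)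
    (ε : ℝ) (hε : 0 ≤ ε)
    (hcross : ∀ i j : ι, i ≠ j → (⟪ψ, P i (P j ψ) + P j (P i ψ)⟫).re ≤ ε)
    (hm : 1 ≤ Fintype.card ι) :
    (Fintype.card ι : ℝ)⁻¹ * ∑ i : ι, (⟪ψ, P i ψ⟫).re
      ≤ (Real.sqrt (Fintype.card ι))⁻¹ + Real.sqrt ε := by
  classical
  have hle : ∀ x : E, (⟪ψ, x⟫).re ≤ ‖x‖ := by
    intro x
    have h1 : (⟪ψ, x⟫).re ≤ ‖⟪ψ, x⟫‖ := Complex.re_le_norm _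
    have h2 : ‖⟪ψ, x⟫‖ ≤ ‖ψ‖ * ‖x‖ := norm_inner_le_norm ψ x
    rw [hψ, one_mul] at h2
    exact h1.trans h2
  have hself : ∀ x : E, (⟪x, x⟫).re = ‖x‖ ^ 2 := by
    intro x
    exact inner_self_eq_norm_sq (𝕜 := ℂ) x
  have hG : ∀ i j : ι, (⟪P i ψ, P j ψ⟫).re ≤ (if i = j then 1 else 0) + ε := by
    intro i j
    by_cases hij : i = j
    · subst hij
      have h1 := hself (P i ψ)
      have h2 : (⟪P i ψ, P i ψ⟫).re ≤ ‖P i ψ‖ := by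
        rw [hPsa, hPidem]
        exact hle _
      simp only [if_true]
      nlinarith [sq_nonneg (‖P i ψ‖ - 1)]
    · have h := hcross i j hij
      rw [inner_add_right, ← hPsa i ψ (P j ψ), ← hPsa j ψ (P i ψ), Complex.add_re] at h
      have hs : (⟪P j ψ, P i ψ⟫).re = (⟪P i ψ, P j ψ⟫).re :=
        inner_re_symm (𝕜 := ℂ) _ _
      rw [hs] at h
      simp only [hij, if_false]
      linarith
  set m : ℝ := (Fintype.card ι : ℝ) with hmdef
  have hm1 : (1 : ℝ) ≤ m := by
    rw [hmdef]
    exact_mod_cast hm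
  have hv : ‖∑ i, P i ψ‖ ^ 2 ≤ m + m ^ 2 * ε := by
    rw [← hself, sum_inner, Complex.re_sum]
    calc ∑ i, (⟪P i ψ, ∑ j, P j ψ⟫).re
        = ∑ i, ∑ j, (⟪P i ψ, P j ψ⟫).re := by
          simp only [inner_sum, Complex.re_sum]
      _ ≤ ∑ i : ι, ∑ j : ι, ((if i = j then 1 else 0) + ε) :=
          Finset.sum_le_sum fun i _ => Finset.sum_le_sum fun j _ => hG i j
      _ = m + m ^ 2 * ε := by
          simp [Finset.sum_add_distrib, ← hmdef]
          ring
  have hS : ∑ i : ι, (⟪ψ, P i ψ⟫).re ≤ ‖∑ i, P i ψ‖ := by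
    have h := hle (∑ i, P i ψ)
    rwa [inner_sum, Complex.re_sum] at h
  have hm0 : 0 ≤ m := by linarith
  have hsm : Real.sqrt m ^ 2 = m := Real.sq_sqrt hm0
  have hse : Real.sqrt ε ^ 2 = ε := Real.sq_sqrt hε
  have hsm0 : 0 < Real.sqrt m := Real.sqrt_pos.mpr (by linarith)
  have hse0 := Real.sqrt_nonneg ε
  have hb : ‖∑ i, P i ψ‖ ≤ Real.sqrt m + m * Real.sqrt ε := by
    refine abs_le_of_sq_le_sq' ?_ (by positivity) |>.2
    have h0 : 0 ≤ Real.sqrt m * (m * Real.sqrt ε) := by positivity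
    calc _ ≤ m + m ^ 2 * ε := hv
      _ = Real.sqrt m ^ 2 + m ^ 2 * Real.sqrt ε ^ 2 := by rw [hsm, hse]
      _ ≤ _ := by nlinarith
  have hinv : m * (Real.sqrt m)⁻¹ = Real.sqrt m := by
    rw [← div_eq_mul_inv, Real.div_sqrt]
  rw [inv_mul_le_iff₀ (by linarith), mul_add, hinv]
  exact hS.trans hb
end
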